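/- The determinant of the moment matrix of the uniform design measure is det M₀ = (b₀ + (m−2)b₁)^{m−1} · (b₀ − 2b₁)^{(m−1)(m−2)/2}. -/

import Mathlib

open Matrix Finset

namespace OofA

/-- The index set `S` of pairs `(i,j)` with `i < j`. -/
abbrev Pairs (m : ℕ) := {ij : Fin m × Fin m // ij.1 < ij.2}

/-- `z_{ij}(a)`: for a treatment `a` (a permutation, `a k` being the component placed at
position `k`), this equals `c h` where `h` is the distance between the positions of the
components `i` and `j` in `a`, with sign `+` if `i` precedes `j` and `-` otherwise. -/
noncomputable def z {m : ℕ} (c : ℕ → ℝ) (a : Equiv.Perm (Fin m)) (ij : Pairs m) : ℝ :=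
  if (a.symm ij.1.1 : ℕ) < (a.symm ij.1.2 : ℕ) then
    c (Nat.dist (a.symm ij.1.1 : ℕ) (a.symm ij.1.2 : ℕ))
  else
    -c (Nat.dist (a.symm ij.1.1 : ℕ) (a.symm ij.1.2 : ℕ))

/-- The vector `x(a) = (1, z(a)ᵀ)ᵀ ∈ ℝ^p`, indexed by `Unit ⊕ Pairs m`. -/
noncomputable def x {m : ℕ} (c : ℕ → ℝ) (a : Equiv.Perm (Fin m)) : (Unit ⊕ Pairs m) → ℝ :=
  Sum.elim (fun _ => (1 : ℝ)) (z c a)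

/-- The moment matrix `M(w) = Σ_a w(a) x(a) x(a)ᵀ` of a design measure `w`. -/
noncomputable def momentMatrix {m : ℕ} (c : ℕ → ℝ) (w : Equiv.Perm (Fin m) → ℝ) :
    Matrix (Unit ⊕ Pairs m) (Unit ⊕ Pairs m) ℝ :=
  ∑ a : Equiv.Perm (Fin m), w a • Matrix.vecMulVec (x c a) (x c a)

/-- The moment matrix `M₀` of the uniform design measure `w₀(a) = 1/m!`. -/
noncomputable def M0 (m : ℕ) (c : ℕ → ℝ) : Matrix (Unit ⊕ Pairs m) (Unit ⊕ Pairs m) ℝ :=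
  momentMatrix c (fun _ => 1 / (Nat.factorial m : ℝ))

/-- A signed permutation matrix: exactly one nonzero entry in each row and in each column,
each nonzero entry being `1` or `-1`. -/
def IsSignedPerm {n : Type*} [Fintype n] (R : Matrix n n ℝ) : Prop :=
  (∀ i, ∃! j, R i j ≠ 0) ∧ (∀ j, ∃! i, R i j ≠ 0) ∧
    (∀ i j, R i j ≠ 0 → R i j = 1 ∨ R i j = -1)

/-- `b₀ = (2/(m(m−1))) Σ_{h=1}^{m−1} (m−h) c_h²`. -/
noncomputable def b0 (m : ℕ) (c : ℕ → ℝ) : ℝ :=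
  (2 / ((m : ℝ) * ((m : ℝ) - 1))) *
    ∑ h ∈ Finset.Icc 1 (m - 1), ((m : ℝ) - (h : ℝ)) * (c h) ^ 2

/-- `b₁ = (2/(m(m−1)(m−2))) Σ (m−h₁−h₂) c_{h₁} (2c_{h₁+h₂} − c_{h₂})`,
summed over `h₁, h₂ ≥ 1` with `h₁ + h₂ ≤ m − 1`. -/
noncomputable def b1 (m : ℕ) (c : ℕ → ℝ) : ℝ :=
  (2 / ((m : ℝ) * ((m : ℝ) - 1) * ((m : ℝ) - 2))) *
    ∑ h1 ∈ Finset.Icc 1 (m - 1), ∑ h2 ∈ Finset.Icc 1 (m - 1 - h1),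
      ((m : ℝ) - (h1 : ℝ) - (h2 : ℝ)) * c h1 * (2 * c (h1 + h2) - c h2)

/-- The `q × q` matrix `V` of (7). -/
noncomputable def V (m : ℕ) : Matrix (Pairs m) (Pairs m) ℝ := fun ij kl =>
  if (ij.1.1 = kl.1.1 ∧ ij.1.2 ≠ kl.1.2) ∨ (ij.1.1 ≠ kl.1.1 ∧ ij.1.2 = kl.1.2) then 1
  else if ij.1.1 = kl.1.2 ∨ ij.1.2 = kl.1.1 then -1
  else 0

/-!
The positions of a uniformly random permutation, seen through a fixed `k`-tuple of components, are
a uniformly random increasing `k`-tuple listed in a uniformly random order. Evaluating the second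
moments of `z` in this way gives `b₀` for a pair with itself and, after reflecting the positions,
`± b₁` for two pairs sharing one component. Disjoint pairs are uncorrelated and all means vanish,
because exchanging the two components of a pair reverses its sign. Hence, with `B` the signed
incidence matrix of the complete graph, `M₀` is block diagonal with blocks `1` and
`(b₀ - 2 b₁) I + b₁ B Bᵀ`. The identity `Bᵀ B = m I - J` and the fact that `B Bᵀ` and `Bᵀ B` have
the same nonzero eigenvalues give the determinant.
-/

section Expectation
open Equiv
open scoped BigOperators

variable {M : Type*}

theorem expect_smul_eq_expect [AddCommMonoid M] [Module ℚ≥0 M] {G X : Type*} [Group G]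
    [Fintype G] [Fintype X] [MulAction G X] [MulAction.IsPretransitive G X] (F : X → M) (x : X) :
    𝔼 g : G, F (g • x) = 𝔼 y, F y := by
  have : Nonempty X := ⟨x⟩
  have orbit_independent (y : X) : 𝔼 g : G, F (g • x) = 𝔼 g : G, F (g • y) := by
    obtain ⟨h, rfl⟩ := MulAction.exists_smul_eq G y x
    exact Fintype.expect_equiv (Equiv.mulRight h) _ _ fun g => by simp [mul_smul]
  calc 𝔼 g : G, F (g • x) = 𝔼 y : X, 𝔼 g : G, F (g • y) := by
        rw [← expect_congr rfl fun y _ => orbit_independent y, Fintype.expect_const]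
    _ = 𝔼 g : G, 𝔼 y : X, F (g • y) := expect_comm _ _ _
    _ = 𝔼 _g : G, 𝔼 y : X, F y := expect_congr rfl fun g _ =>
        Fintype.expect_equiv (MulAction.toPerm g) _ _ fun _ => rfl
    _ = 𝔼 y, F y := Fintype.expect_const _

theorem expect_perm_eq_zero_of_swap {α : Type*} [Fintype α] [DecidableEq α] [AddCommGroup M]
    [Module ℚ≥0 M] {F : Perm α → M} (i j : α) (hF : ∀ σ, F (σ * swap i j) = -F σ) :
    𝔼 σ, F σ = 0 := by
  have : IsAddTorsionFree M := .of_module_nnrat M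
  rw [← self_eq_neg, ← expect_neg_distrib]
  exact (Fintype.expect_equiv (Equiv.mulRight (swap i j)) _ _ fun σ => (hF σ).symm).symm

variable {α : Type*} [LinearOrder α] {k : ℕ}

/-- An injective `k`-tuple is an increasing one together with the order in which it is listed. -/
noncomputable def orderEmbeddingProdPermEquiv (α : Type*) [LinearOrder α] (k : ℕ) :
    (Fin k ↪o α) × Perm (Fin k) ≃ (Fin k ↪ α) :=
  Equiv.ofBijective (fun p => p.2.toEmbedding.trans p.1.toEmbedding) <| by
    constructor
    · rintro ⟨e, τ⟩ ⟨e', τ'⟩ h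
      have hfun : (e ∘ τ : Fin k → α) = e' ∘ τ' := congrArg DFunLike.coe h
      obtain rfl : e = e' := by
        rw [← DFunLike.coe_fn_eq, ← e.strictMono.range_inj e'.strictMono,
          ← τ.surjective.range_comp, hfun, τ'.surjective.range_comp]
      exact Prod.ext rfl (Equiv.ext fun i => e.injective (congrFun hfun i))
    · intro f
      have hmono : StrictMono (f ∘ Tuple.sort f) :=
        (Tuple.monotone_sort f).strictMono_of_injective (f.injective.comp (Equiv.injective _))
      exact ⟨(OrderEmbedding.ofStrictMono _ hmono, (Tuple.sort f)⁻¹), by ext; simp⟩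

theorem card_orderEmbedding_fin [Fintype α] :
    Fintype.card (Fin k ↪o α) = (Fintype.card α).choose k := by
  have h := Fintype.card_congr (orderEmbeddingProdPermEquiv α k)
  rw [Fintype.card_prod, Fintype.card_perm, Fintype.card_embedding_eq, Fintype.card_fin,
    Nat.descFactorial_eq_factorial_mul_choose, mul_comm] at h
  exact Nat.eq_of_mul_eq_mul_left k.factorial_pos h

theorem expect_perm_comp [Fintype α] [AddCommMonoid M] [Module ℚ≥0 M] (F : (Fin k → α) → M)
    (f : Fin k ↪ α) :
    𝔼 σ : Perm α, F (σ ∘ f) = 𝔼 e : Fin k ↪o α, 𝔼 τ : Perm (Fin k), F (e ∘ τ) := by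
  have := Equiv.Perm.isMultiplyPretransitive α k
  calc 𝔼 σ : Perm α, F (σ ∘ f) = 𝔼 f' : Fin k ↪ α, F f' :=
        expect_smul_eq_expect (G := Perm α) (fun f' : Fin k ↪ α => F f') f
    _ = 𝔼 p : (Fin k ↪o α) × Perm (Fin k), F (p.1 ∘ p.2) :=
        (Fintype.expect_equiv (orderEmbeddingProdPermEquiv α k) _ _ fun _ => rfl).symm
    _ = 𝔼 e : Fin k ↪o α, 𝔼 τ : Perm (Fin k), F (e ∘ τ) := expect_product _ _ _

end Expectation

section GapSums

variable {M : Type*} [AddCommMonoid M]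

theorem sum_orderEmbedding_fin_two (m : ℕ) (f : ℕ → M) :
    ∑ e : Fin 2 ↪o Fin m, f (e 1 - e 0) = ∑ h ∈ Icc 1 (m - 1), (m - h) • f h := by
  calc ∑ e : Fin 2 ↪o Fin m, f (e 1 - e 0)
      = ∑ p ∈ (Icc 1 (m - 1)).sigma fun h => range (m - h), f p.1 := by
        refine sum_nbij (fun e => ⟨e 1 - e 0, e 0⟩) ?mem ?inj ?surj fun _ _ => rfl
        case mem =>
          intro e _
          have : (e 0 : ℕ) < e 1 := e.strictMono (by decide)
          grind
        case inj =>
          intro e _ e' _ h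
          have : (e 0 : ℕ) < e 1 := e.strictMono (by decide)
          have : (e' 0 : ℕ) < e' 1 := e'.strictMono (by decide)
          refine DFunLike.ext _ _ fun i => ?_
          simp only [Sigma.mk.injEq, heq_eq_eq] at h
          fin_cases i <;> ext <;> grind
        case surj =>
          rintro ⟨h, u⟩ hp
          simp only [mem_coe, mem_sigma, mem_Icc, mem_range, Nat.one_le_iff_ne_zero,
            ← Nat.pos_iff_ne_zero] at hp
          refine ⟨OrderEmbedding.ofStrictMono ![⟨u, by grind⟩, ⟨u + h, by grind⟩] ?_, ?_, ?_⟩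
          · simp [Fin.lt_def, hp.1.1]
          · simp
          · simp
    _ = ∑ h ∈ Icc 1 (m - 1), (m - h) • f h := by simp [sum_sigma]

theorem sum_orderEmbedding_fin_three (m : ℕ) (f : ℕ → ℕ → M) :
    ∑ e : Fin 3 ↪o Fin m, f (e 1 - e 0) (e 2 - e 1) =
      ∑ h₁ ∈ Icc 1 (m - 1), ∑ h₂ ∈ Icc 1 (m - 1 - h₁), (m - h₁ - h₂) • f h₁ h₂ := by
  calc ∑ e : Fin 3 ↪o Fin m, f (e 1 - e 0) (e 2 - e 1)
      = ∑ p ∈ (Icc 1 (m - 1)).sigma fun h₁ =>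
            (Icc 1 (m - 1 - h₁)).sigma fun h₂ => range (m - h₁ - h₂),
          f p.1 p.2.1 := by
        refine sum_nbij (fun e => ⟨e 1 - e 0, e 2 - e 1, e 0⟩) ?mem ?inj ?surj fun _ _ => rfl
        case mem =>
          intro e _
          have : (e 0 : ℕ) < e 1 := e.strictMono (by decide)
          have : (e 1 : ℕ) < e 2 := e.strictMono (by decide)
          grind
        case inj =>
          intro e _ e' _ h
          have : (e 0 : ℕ) < e 1 := e.strictMono (by decide)
          have : (e 1 : ℕ) < e 2 := e.strictMono (by decide)
          have : (e' 0 : ℕ) < e' 1 := e'.strictMono (by decide)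
          have : (e' 1 : ℕ) < e' 2 := e'.strictMono (by decide)
          refine DFunLike.ext _ _ fun i => ?_
          simp only [Sigma.mk.injEq, heq_eq_eq] at h
          fin_cases i <;> ext <;> grind
        case surj =>
          rintro ⟨h₁, h₂, u⟩ hp
          simp only [mem_coe, mem_sigma, mem_Icc, mem_range, Nat.one_le_iff_ne_zero,
            ← Nat.pos_iff_ne_zero] at hp
          refine ⟨OrderEmbedding.ofStrictMono
            ![⟨u, by grind⟩, ⟨u + h₁, by grind⟩, ⟨u + h₁ + h₂, by grind⟩] ?_, ?_, ?_⟩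
          · simp [Fin.lt_def, hp.1.1, hp.2.1.1]
          · simp
          · simp
    _ = ∑ h₁ ∈ Icc 1 (m - 1), ∑ h₂ ∈ Icc 1 (m - 1 - h₁), (m - h₁ - h₂) • f h₁ h₂ := by
        simp [sum_sigma]

end GapSums

section SignedWeight
open Equiv
open scoped BigOperators

variable {m : ℕ} (c : ℕ → ℝ)

/-- The signed weight of an ordered pair of positions, equal to `c |v - u|` if `u` comes before `v`
and to `-c |v - u|` if it comes after; `z_{ij}(a)` is its value at the positions of `i` and `j`.
It is `0` for `u = v`, which makes it antisymmetric without exception. -/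
noncomputable def signedWeight (u v : Fin m) : ℝ :=
  ((v - u : ℤ).sign : ℝ) * c (Nat.dist u v)

theorem signedWeight_of_lt {u v : Fin m} (h : u < v) : signedWeight c u v = c (v - u) := by
  have : (u : ℕ) < v := h
  rw [signedWeight, Int.sign_eq_one_of_pos (by omega), Nat.dist_eq_sub_of_le this.le, Int.cast_one,
    one_mul]

theorem signedWeight_swap (u v : Fin m) : signedWeight c v u = -signedWeight c u v := by
  rw [signedWeight, signedWeight, ← neg_sub, Int.sign_neg, Nat.dist_comm, Int.cast_neg, neg_mul]

theorem z_eq_signedWeight (a : Perm (Fin m)) (p : Pairs m) :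
    z c a p = signedWeight c (a⁻¹ p.1.1) (a⁻¹ p.1.2) := by
  change z c a p = signedWeight c (a.symm p.1.1) (a.symm p.1.2)
  rcases lt_or_gt_of_ne (a.symm.injective.ne p.2.ne) with h | h
  · rw [z, if_pos (Fin.lt_def.1 h), signedWeight_of_lt c h, Nat.dist_eq_sub_of_le (le_of_lt h)]
  · rw [z, if_neg (lt_asymm (Fin.lt_def.1 h)), signedWeight_swap, signedWeight_of_lt c h,
      Nat.dist_eq_sub_of_le_right (le_of_lt h)]

theorem b0_eq_expect (m : ℕ) :
    b0 m c = 𝔼 e : Fin 2 ↪o Fin m, c (e 1 - e 0) ^ 2 := by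
  rw [Fintype.expect_eq_sum_div_card, sum_orderEmbedding_fin_two m (fun h => c h ^ 2),
    card_orderEmbedding_fin, Fintype.card_fin, Nat.cast_choose_two, div_eq_inv_mul, inv_div, b0]
  congr 1
  refine sum_congr rfl fun h hh => ?_
  rw [nsmul_eq_mul, Nat.cast_sub (by grind)]

theorem cast_choose_three (m : ℕ) : (m.choose 3 : ℝ) = m * (m - 1) * (m - 2) / 6 := by
  rw [Nat.cast_choose_eq_descPochhammer_div]
  simp [descPochhammer_succ_eval, Nat.factorial]

theorem b1_eq_expect (m : ℕ) :
    b1 m c = 𝔼 e : Fin 3 ↪o Fin m,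
      (2 * (c (e 1 - e 0) * c (e 2 - e 0)) - c (e 1 - e 0) * c (e 2 - e 1)) / 3 := by
  have gap_add (e : Fin 3 ↪o Fin m) : (e 2 - e 0 : ℕ) = (e 1 - e 0) + (e 2 - e 1) := by
    have : (e 0 : ℕ) < e 1 := e.strictMono (by decide)
    have : (e 1 : ℕ) < e 2 := e.strictMono (by decide)
    omega
  have coeff : 2 / ((m : ℝ) * (m - 1) * (m - 2)) = (m.choose 3 : ℝ)⁻¹ / 3 := by
    rw [cast_choose_three, inv_div]
    ring
  simp_rw [gap_add]
  rw [Fintype.expect_eq_sum_div_card, sum_orderEmbedding_fin_three m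
      (fun h₁ h₂ => (2 * (c h₁ * c (h₁ + h₂)) - c h₁ * c h₂) / 3),
    card_orderEmbedding_fin, Fintype.card_fin, div_eq_inv_mul, b1, coeff]
  simp_rw [mul_sum]
  refine sum_congr rfl fun h₁ hh₁ => sum_congr rfl fun h₂ hh₂ => ?_
  rw [nsmul_eq_mul, Nat.cast_sub (by grind), Nat.cast_sub (by grind)]
  ring

theorem sum_perm_fin_two {M : Type*} [AddCommMonoid M] (F : Fin 2 → Fin 2 → M) :
    ∑ τ : Perm (Fin 2), F (τ 0) (τ 1) = F 0 1 + F 1 0 := by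
  rw [show (univ : Finset (Perm (Fin 2))) = {1, swap 0 1} by decide, sum_pair (by decide)]
  rfl

theorem sum_perm_fin_three {M : Type*} [AddCommMonoid M] (F : Fin 3 → Fin 3 → Fin 3 → M) :
    ∑ τ : Perm (Fin 3), F (τ 0) (τ 1) (τ 2) =
      F 0 1 2 + F 0 2 1 + F 1 0 2 + F 1 2 0 + F 2 0 1 + F 2 1 0 := by
  rw [show (univ : Finset (Perm (Fin 3))) =
    {1, swap 1 2, swap 0 1, swap 0 1 * swap 1 2, swap 0 2 * swap 1 2, swap 0 2} by decide]
  repeat rw [sum_insert (by decide)]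
  rw [sum_singleton]
  simp only [← add_assoc]
  rfl

theorem expect_orderEmbedding_rev {M : Type*} [AddCommMonoid M] [Module ℚ≥0 M] {k m : ℕ}
    (F : (Fin k → Fin m) → M) :
    𝔼 e : Fin k ↪o Fin m, F (fun i => (e i.rev).rev) = 𝔼 e : Fin k ↪o Fin m, F e := by
  let reflect (e : Fin k ↪o Fin m) : Fin k ↪o Fin m :=
    OrderEmbedding.ofStrictMono (fun i => (e i.rev).rev)
      fun _ _ h => Fin.rev_lt_rev.2 (e.strictMono (Fin.rev_lt_rev.2 h))
  have involutive : Function.Involutive reflect := fun e => DFunLike.ext _ _ fun i => by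
    change (e i.rev.rev).rev.rev = e i
    rw [Fin.rev_rev, Fin.rev_rev]
  exact Fintype.expect_equiv involutive.toPerm _ _ fun _ => rfl

theorem expect_last_gap_mul_eq_expect_first_gap_mul (m : ℕ) :
    𝔼 e : Fin 3 ↪o Fin m, c (e 2 - e 1) * c (e 2 - e 0) =
      𝔼 e : Fin 3 ↪o Fin m, c (e 1 - e 0) * c (e 2 - e 0) := by
  rw [← expect_orderEmbedding_rev
    (fun t : Fin 3 → Fin m => c (t 2 - t 1) * c (t 2 - t 0))]
  refine expect_congr rfl fun e _ => ?_
  have rev_sub_rev (u v : Fin m) : (u.rev - v.rev : ℕ) = v - u := by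
    rw [Fin.val_rev, Fin.val_rev]
    omega
  simp only [rev_sub_rev]
  rfl

theorem expect_perm_signedWeight_sq (e : Fin 2 ↪o Fin m) :
    𝔼 τ : Perm (Fin 2), signedWeight c (e (τ 0)) (e (τ 1)) ^ 2 = c (e 1 - e 0) ^ 2 := by
  rw [Fintype.expect_eq_sum_div_card, sum_perm_fin_two fun u v => signedWeight c (e u) (e v) ^ 2,
    signedWeight_swap c (e 0) (e 1), neg_sq, signedWeight_of_lt c (e.strictMono (by decide)),
    Fintype.card_perm]
  simp

theorem expect_perm_signedWeight_mul (e : Fin 3 ↪o Fin m) :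
    𝔼 τ : Perm (Fin 3), signedWeight c (e (τ 0)) (e (τ 1)) * signedWeight c (e (τ 0)) (e (τ 2)) =
      (c (e 1 - e 0) * c (e 2 - e 0) + c (e 2 - e 1) * c (e 2 - e 0) -
        c (e 1 - e 0) * c (e 2 - e 1)) / 3 := by
  have card_perm : (Fintype.card (Perm (Fin 3)) : ℝ) = 6 := by
    rw [Fintype.card_perm, Fintype.card_fin]
    norm_num [Nat.factorial]
  rw [Fintype.expect_eq_sum_div_card, card_perm,
    sum_perm_fin_three fun u v w => signedWeight c (e u) (e v) * signedWeight c (e u) (e w),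
    signedWeight_swap c (e 0) (e 1), signedWeight_swap c (e 0) (e 2),
    signedWeight_swap c (e 1) (e 2),
    signedWeight_of_lt c (e.strictMono (by decide : (0 : Fin 3) < 1)),
    signedWeight_of_lt c (e.strictMono (by decide : (0 : Fin 3) < 2)),
    signedWeight_of_lt c (e.strictMono (by decide : (1 : Fin 3) < 2))]
  ring

variable {i j k l : Fin m}

theorem expect_signedWeight_sq (hij : i ≠ j) :
    𝔼 σ : Perm (Fin m), signedWeight c (σ i) (σ j) ^ 2 = b0 m c := by
  have inj : Function.Injective ![i, j] := by
    simpa [Function.Injective, Fin.forall_fin_two] using ⟨hij, hij.symm⟩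
  calc 𝔼 σ : Perm (Fin m), signedWeight c (σ i) (σ j) ^ 2
      = 𝔼 e : Fin 2 ↪o Fin m, 𝔼 τ : Perm (Fin 2), signedWeight c (e (τ 0)) (e (τ 1)) ^ 2 :=
        expect_perm_comp (fun t : Fin 2 → Fin m => signedWeight c (t 0) (t 1) ^ 2) ⟨![i, j], inj⟩
    _ = b0 m c := by simp_rw [expect_perm_signedWeight_sq, b0_eq_expect]

theorem expect_signedWeight_mul (hij : i ≠ j) (hil : i ≠ l) (hjl : j ≠ l) :
    𝔼 σ : Perm (Fin m), signedWeight c (σ i) (σ j) * signedWeight c (σ i) (σ l) = b1 m c := by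
  have inj : Function.Injective ![i, j, l] := by
    simp [Function.Injective, Fin.forall_fin_succ, hij, hil, hjl, hij.symm, hil.symm, hjl.symm]
  calc 𝔼 σ : Perm (Fin m), signedWeight c (σ i) (σ j) * signedWeight c (σ i) (σ l)
      = 𝔼 e : Fin 3 ↪o Fin m, 𝔼 τ : Perm (Fin 3),
          signedWeight c (e (τ 0)) (e (τ 1)) * signedWeight c (e (τ 0)) (e (τ 2)) :=
        expect_perm_comp (fun t : Fin 3 → Fin m =>
          signedWeight c (t 0) (t 1) * signedWeight c (t 0) (t 2)) ⟨![i, j, l], inj⟩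
    _ = b1 m c := by
        simp_rw [expect_perm_signedWeight_mul, b1_eq_expect, ← expect_div, expect_sub_distrib,
          expect_add_distrib, expect_last_gap_mul_eq_expect_first_gap_mul, ← mul_expect,
          two_mul]

theorem expect_signedWeight (i j : Fin m) :
    𝔼 σ : Perm (Fin m), signedWeight c (σ i) (σ j) = 0 :=
  expect_perm_eq_zero_of_swap i j fun σ => by
    simp [signedWeight_swap c (σ i)]

theorem expect_signedWeight_mul_disjoint (hki : k ≠ i) (hkj : k ≠ j) (hli : l ≠ i) (hlj : l ≠ j) :
    𝔼 σ : Perm (Fin m), signedWeight c (σ i) (σ j) * signedWeight c (σ k) (σ l) = 0 :=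
  expect_perm_eq_zero_of_swap i j fun σ => by
    simp [signedWeight_swap c (σ i), swap_apply_of_ne_of_ne, *]

end SignedWeight

section Pairs

theorem sum_sum_eq_sum_diag_add_sum_lt {ι M : Type*} [LinearOrder ι] [Fintype ι] [AddCommMonoid M]
    (φ : ι → ι → M) :
    ∑ i, ∑ j, φ i j = ∑ i, φ i i +
      ∑ p : {ij : ι × ι // ij.1 < ij.2}, (φ p.1.1 p.1.2 + φ p.1.2 p.1.1) := by
  have split (i j : ι) : φ i j = (if i = j then φ i j else 0) +
      ((if i < j then φ i j else 0) + if j < i then φ i j else 0) := by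
    rcases lt_trichotomy i j with h | rfl | h <;> simp [*, ne_of_lt, ne_of_gt, not_lt_of_gt]
  have sum_lt (ψ : ι → ι → M) : ∑ i, ∑ j, (if i < j then ψ i j else 0) =
      ∑ p : {ij : ι × ι // ij.1 < ij.2}, ψ p.1.1 p.1.2 := by
    rw [← Fintype.sum_prod_type', ← sum_filter, ← sum_subtype_eq_sum_filter]
    simp
  rw [sum_congr rfl fun i _ => sum_congr rfl fun j _ => split i j]
  simp_rw [sum_add_distrib]
  rw [sum_comm (f := fun i j => if j < i then φ i j else 0), sum_lt φ, sum_lt fun i j => φ j i]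
  simp

theorem card_pairs (m : ℕ) : Fintype.card (Pairs m) = m.choose 2 := by
  have h : m * m = m + Fintype.card (Pairs m) * 2 := by
    simpa using sum_sum_eq_sum_diag_add_sum_lt (ι := Fin m) (M := ℕ) fun _ _ => 1
  rw [Nat.choose_two_right, Nat.mul_sub_one]
  omega

end Pairs

section Incidence

variable (R : Type*) [CommRing R] (m : ℕ)

local notation "δ" => (1 : Matrix (Fin m) (Fin m) R)

/-- The signed incidence matrix of the complete graph on `Fin m`, whose edges `i < j` are oriented
from `i` to `j`; the row of such an edge is `eᵢ - eⱼ`. -/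
def incidence : Matrix (Pairs m) (Fin m) R := fun p k =>
  δ p.1.1 k - δ p.1.2 k

theorem incidence_mul_transpose_apply (p q : Pairs m) :
    (incidence R m * (incidence R m)ᵀ) p q =
      δ p.1.1 q.1.1 - δ p.1.1 q.1.2 - δ p.1.2 q.1.1 + δ p.1.2 q.1.2 := by
  simp only [incidence, mul_apply, transpose_apply, sub_mul, sum_sub_distrib, one_apply,
    ite_mul, one_mul, zero_mul, sum_ite_eq, mem_univ, if_true]
  simp only [eq_comm]
  ring

theorem transpose_incidence_mul :
    (incidence R m)ᵀ * incidence R m = scalar (Fin m) (m : R) - vecMulVec 1 1 := by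
  ext k l
  have antisymmetrize (i j : Fin m) :
      (δ i k - δ j k) * (δ i l - δ j l) = δ i k * (δ i l - δ j l) + δ j k * (δ j l - δ i l) := by
    ring
  calc ((incidence R m)ᵀ * incidence R m) k l
      = ∑ p : Pairs m, (δ p.1.1 k - δ p.1.2 k) * (δ p.1.1 l - δ p.1.2 l) := rfl
    _ = ∑ i, ∑ j, δ i k * (δ i l - δ j l) := by
        rw [sum_sum_eq_sum_diag_add_sum_lt fun i j => δ i k * (δ i l - δ j l)]
        simp only [antisymmetrize, sub_self, mul_zero, sum_const_zero, zero_add]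
    _ = (scalar (Fin m) (m : R) - vecMulVec 1 1 : Matrix _ _ R) k l := by
        rw [Matrix.sub_apply, scalar_apply, diagonal_apply]
        simp [one_apply, eq_comm]

end Incidence

theorem det_scalar_sub_mul_comm {R n k : Type*} [CommRing R] [Fintype n] [Fintype k]
    [DecidableEq n] [DecidableEq k] (A : Matrix n k R) (B : Matrix k n R)
    (hle : Fintype.card k ≤ Fintype.card n) (μ : R) :
    (scalar n μ - A * B).det =
      μ ^ (Fintype.card n - Fintype.card k) * (scalar k μ - B * A).det := by
  rw [← eval_charpoly, charpoly_mul_comm_of_le A B hle, Polynomial.eval_mul, Polynomial.eval_pow,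
    Polynomial.eval_X, eval_charpoly]

theorem det_scalar_sub_vecMulVec {R n : Type*} [CommRing R] [Fintype n] [DecidableEq n]
    [Nonempty n] (u v : n → R) (μ : R) :
    (scalar n μ - vecMulVec u v).det = (μ - u ⬝ᵥ v) * μ ^ (Fintype.card n - 1) := by
  rw [← eval_charpoly, charpoly_vecMulVec]
  simp only [Polynomial.eval_sub, Polynomial.eval_pow, Polynomial.eval_X, Polynomial.eval_smul,
    smul_eq_mul]
  rw [← pow_sub_one_mul Fintype.card_ne_zero μ]
  ring

theorem det_scalar_add_smul_incidence {R : Type*} [CommRing R] {m : ℕ} (hm : 3 ≤ m) (a b : R) :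
    (scalar (Pairs m) a + b • (incidence R m * (incidence R m)ᵀ)).det =
      (a + m * b) ^ (m - 1) * a ^ ((m - 1).choose 2) := by
  have : Nonempty (Fin m) := ⟨0, by omega⟩
  have choose_eq : m.choose 2 = (m - 1) + (m - 1).choose 2 := by
    simpa using Nat.choose_eq_choose_pred_add (by omega : 0 < m) two_pos
  have exponent : m.choose 2 - m + 1 = (m - 1).choose 2 := by
    have : 0 < (m - 1).choose 2 := Nat.choose_pos (by omega)
    omega
  have gram : scalar (Fin m) a - (incidence R m)ᵀ * (-b • incidence R m) =
      scalar (Fin m) (a + m * b) - vecMulVec (b • 1) 1 := by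
    rw [Matrix.mul_smul, transpose_incidence_mul]
    ext k l
    simp only [Matrix.sub_apply, Matrix.smul_apply, scalar_apply, diagonal_apply,
      vecMulVec_apply, smul_eq_mul, Pi.smul_apply, Pi.one_apply]
    split_ifs <;> ring
  calc (scalar (Pairs m) a + b • (incidence R m * (incidence R m)ᵀ)).det
      = (scalar (Pairs m) a - (-b • incidence R m) * (incidence R m)ᵀ).det := by
        rw [Matrix.smul_mul, neg_smul, sub_neg_eq_add]
    _ = a ^ (m.choose 2 - m) * (scalar (Fin m) (a + m * b) - vecMulVec (b • 1) 1).det := by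
        rw [det_scalar_sub_mul_comm _ _ (by rw [card_pairs, Fintype.card_fin]; omega), gram,
          card_pairs, Fintype.card_fin]
    _ = a ^ (m.choose 2 - m) * (a * (a + m * b) ^ (m - 1)) := by
        rw [det_scalar_sub_vecMulVec, Fintype.card_fin]
        simp [dotProduct]
    _ = (a + m * b) ^ (m - 1) * a ^ ((m - 1).choose 2) := by
        rw [← exponent, pow_succ]
        ring

section Covariance
open Equiv
open scoped BigOperators

variable {m : ℕ} (c : ℕ → ℝ) {i j k l : Fin m}

local notation "δ" => (1 : Matrix (Fin m) (Fin m) ℝ)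

theorem expect_signedWeight_mul_signedWeight (hij : i ≠ j) (hkl : k ≠ l) :
    𝔼 σ : Perm (Fin m), signedWeight c (σ i) (σ j) * signedWeight c (σ k) (σ l) =
      (b0 m c - 2 * b1 m c) * (δ i k * δ j l - δ i l * δ j k) +
        b1 m c * (δ i k - δ i l - δ j k + δ j l) := by
  have swap_left (i j : Fin m) (σ : Perm (Fin m)) := signedWeight_swap c (σ j) (σ i)
  by_cases hik : i = k <;> by_cases hjl : j = l
  · subst hik hjl
    simp_rw [← sq, expect_signedWeight_sq c hij]
    simp only [one_apply_eq, one_apply_ne hij, one_apply_ne hij.symm]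
    ring
  · subst hik
    simp [expect_signedWeight_mul c hij hkl hjl, hij.symm, hkl, hjl]
  · subst hjl
    simp_rw [swap_left i j, swap_left k j, neg_mul_neg]
    simp [expect_signedWeight_mul c hij.symm hkl.symm hik, hij, hkl.symm, hik]
  by_cases hil : i = l <;> by_cases hjk : j = k
  · subst hil hjk
    simp_rw [swap_left j i, mul_neg, expect_neg_distrib, ← sq, expect_signedWeight_sq c hij]
    simp only [one_apply_eq, one_apply_ne hij, one_apply_ne hij.symm]
    ring
  · subst hil
    simp_rw [swap_left k i, mul_neg, expect_neg_distrib]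
    simp [expect_signedWeight_mul c hij hik hjk, hik, hjl, hjk]
  · subst hjk
    simp_rw [swap_left i j, neg_mul, expect_neg_distrib]
    simp [expect_signedWeight_mul c hij.symm hkl hil, hik, hil, hjl]
  · rw [expect_signedWeight_mul_disjoint c (Ne.symm hik) (Ne.symm hjk) (Ne.symm hil) (Ne.symm hjl)]
    simp [hik, hjl, hil, hjk]

theorem expect_z (p : Pairs m) : 𝔼 a, z c a p = 0 := by
  simp_rw [z_eq_signedWeight]
  rw [← expect_signedWeight c p.1.1 p.1.2]
  exact Fintype.expect_equiv (Equiv.inv _) _ _ fun _ => rfl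

theorem expect_z_mul_z (p q : Pairs m) :
    𝔼 a, z c a p * z c a q =
      (scalar (Pairs m) (b0 m c - 2 * b1 m c) +
        b1 m c • (incidence ℝ m * (incidence ℝ m)ᵀ)) p q := by
  have not_reversed : δ p.1.1 q.1.2 * δ p.1.2 q.1.1 = 0 := by
    rcases ne_or_eq p.1.1 q.1.2 with h | h
    · rw [one_apply_ne h, zero_mul]
    · rw [one_apply_ne (q.2.trans (h ▸ p.2)).ne', mul_zero]
  have same : (1 : Matrix _ _ ℝ) p q = δ p.1.1 q.1.1 * δ p.1.2 q.1.2 := by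
    simp only [one_apply, Subtype.ext_iff, Prod.ext_iff, ite_and, ite_mul, one_mul, zero_mul]
  calc 𝔼 a, z c a p * z c a q
      = 𝔼 σ : Perm (Fin m),
          signedWeight c (σ p.1.1) (σ p.1.2) * signedWeight c (σ q.1.1) (σ q.1.2) :=
        Fintype.expect_equiv (Equiv.inv _) _ _ fun a => by
          simp_rw [z_eq_signedWeight, Equiv.inv_apply]
    _ = _ := by
        rw [expect_signedWeight_mul_signedWeight c p.2.ne q.2.ne, not_reversed, sub_zero, ← same,
          ← incidence_mul_transpose_apply]
        simp [one_apply, diagonal_apply]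

theorem M0_apply (r s : Unit ⊕ Pairs m) : M0 m c r s = 𝔼 a, x c a r * x c a s := by
  rw [Fintype.expect_eq_sum_div_card, Fintype.card_perm, Fintype.card_fin, M0, momentMatrix,
    Matrix.sum_apply, sum_div]
  refine sum_congr rfl fun a _ => ?_
  rw [Matrix.smul_apply, vecMulVec_apply, smul_eq_mul, one_div_mul_eq_div]

theorem M0_eq_fromBlocks :
    M0 m c = fromBlocks 1 0 0 (scalar (Pairs m) (b0 m c - 2 * b1 m c) +
      b1 m c • (incidence ℝ m * (incidence ℝ m)ᵀ)) := by
  ext (_ | p) (_ | q)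
  · simp [M0_apply, x]
  · simp [M0_apply, x, expect_z]
  · simp [M0_apply, x, expect_z]
  · exact (M0_apply c _ _).trans (expect_z_mul_z c p q)

end Covariance

theorem statement12_general {m : ℕ} (hm : 3 ≤ m) (c : ℕ → ℝ) :
    (M0 m c).det = (b0 m c + ((m : ℝ) - 2) * b1 m c) ^ (m - 1) *
      (b0 m c - 2 * b1 m c) ^ ((m - 1) * (m - 2) / 2) := by
  rw [M0_eq_fromBlocks, det_fromBlocks_zero₁₂, det_one, one_mul, det_scalar_add_smul_incidence hm,
    Nat.choose_two_right, Nat.sub_sub]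
  ring

/-- `det M₀ = (b₀ + (m−2)b₁)^{m−1} (b₀ − 2b₁)^{(m−1)(m−2)/2}`. -/
theorem statement12 {m : ℕ} (hm : 3 ≤ m) (c : ℕ → ℝ) (hc1 : c 1 = 1)
    (hmono : ∀ h : ℕ, 1 ≤ h → h + 1 ≤ m - 1 → c (h + 1) ≤ c h)
    (hlast : 0 ≤ c (m - 1)) :
    (M0 m c).det = (b0 m c + ((m : ℝ) - 2) * b1 m c) ^ (m - 1) *
      (b0 m c - 2 * b1 m c) ^ ((m - 1) * (m - 2) / 2) :=
  statement12_general hm c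

end OofA
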